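/- arXiv:1902.03299 — 6 statements merged into one kernel-verified Lean document; each statement's English description precedes it below -/
import Mathlib

section
/- Let X be a real vector space and let S be a nonempty convex subset of X. Then the algebraic interior is idempotent: cor(cor(S)) = cor(S). -/
/-!
Every set contains its algebraic interior. Conversely, if `x` is in the core of a convex set `S` and
the segment from `x` to `x + a • y` lies in `S`, then every point `x + lam • y` of its first half is
again in the core: `x + lam • y + mu • z` is the midpoint of `x + (2 * lam) • y` and
`x + (2 * mu) • z`, both of which lie in `S` for small `mu`.
-/

/-- The algebraic interior (core) of a set `S` in a real vector space. -/
def algCor {X : Type*} [AddCommGroup X] [Module ℝ X] (S : Set X) : Set X :=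
  {x | ∀ y : X, ∃ lb : ℝ, 0 < lb ∧ ∀ lam : ℝ, lam ∈ Set.Icc (0 : ℝ) lb → x + lam • y ∈ S}

/-- The algebraic closure (lin) of a set `S` in a real vector space: `S` together with
all points linearly accessible from `S`. -/
def algLin {X : Type*} [AddCommGroup X] [Module ℝ X] (S : Set X) : Set X :=
  S ∪ {xb | ∃ x ∈ S, x ≠ xb ∧
    ∀ lam : ℝ, lam ∈ Set.Ioc (0 : ℝ) 1 → lam • x + (1 - lam) • xb ∈ S}

theorem stmt0 {X : Type*} [AddCommGroup X] [Module ℝ X]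
    (S : Set X) (hS : S.Nonempty) (hconv : Convex ℝ S) :
    algCor (algCor S) = algCor S := by
  have sub : ∀ T : Set X, algCor T ⊆ T := fun T x hx => by
    obtain ⟨lb, hlb, h⟩ := hx 0
    simpa using h 0 ⟨le_rfl, hlb.le⟩
  refine Set.Subset.antisymm (sub _) fun x hx y => ?_
  obtain ⟨a, ha, hy⟩ := hx y
  refine ⟨a / 2, by positivity, fun lam hlam z => ?_⟩
  obtain ⟨b, hb, hz⟩ := hx z
  refine ⟨b / 2, by positivity, fun mu hmu => ?_⟩
  have h1 := hy (2 * lam) ⟨by linarith [hlam.1], by linarith [hlam.2]⟩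
  have h2 := hz (2 * mu) ⟨by linarith [hmu.1], by linarith [hmu.2]⟩
  have h := hconv h1 h2 (a := 1 / 2) (b := 1 / 2) (by norm_num) (by norm_num) (by norm_num)
  convert h using 1
  module
end

section
/- Let X be a real vector space and let S be a nonempty convex subset of X with cor(S) ≠ ∅. Then cor(lin(S)) = cor(S). -/
theorem subset_algLin {X : Type*} [AddCommGroup X] [Module ℝ X] (S : Set X) :
    S ⊆ algLin S := Set.subset_union_left

theorem algCor_mono {X : Type*} [AddCommGroup X] [Module ℝ X] {S T : Set X} (h : S ⊆ T) :
    algCor S ⊆ algCor T := by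
  intro x hx y
  obtain ⟨lb, hlb, H⟩ := hx y
  exact ⟨lb, hlb, fun lam hlam => h (H lam hlam)⟩

/-- Uniform description of the points of `algLin S`: for points of `S` itself the segment may be
degenerate (`u = z`). -/
theorem exists_segment_of_mem_algLin {X : Type*} [AddCommGroup X] [Module ℝ X] {S : Set X} {z : X}
    (hz : z ∈ algLin S) :
    ∃ u : X, ∀ lam : ℝ, lam ∈ Set.Ioc (0 : ℝ) 1 → lam • u + (1 - lam) • z ∈ S := by
  rcases hz with hz | ⟨u, -, -, hu⟩
  · refine ⟨z, fun lam _ => ?_⟩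
    rwa [← add_smul, add_sub_cancel, one_smul]
  · exact ⟨u, hu⟩

/-- If `x` lies strictly between a core point `c` and a point `x + t • (x - c)` of `algLin S`,
then `x` is itself a core point. -/
theorem mem_algCor_of_between {X : Type*} [AddCommGroup X] [Module ℝ X] {S : Set X}
    (hconv : Convex ℝ S) {c x : X} (hc : c ∈ algCor S) {t : ℝ} (ht : 0 < t)
    (hz : x + t • (x - c) ∈ algLin S) : x ∈ algCor S := by
  intro y
  obtain ⟨u, hu⟩ := exists_segment_of_mem_algLin hz
  obtain ⟨a, ha, hA⟩ := hc (x + t • (x - c) - u)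
  obtain ⟨b, hb, hB⟩ := hc y
  -- `m` is small enough that `c + (2 * m / t) • (z - u) ∈ S`, where `z = x + t • (x - c)`.
  obtain ⟨m, hm0, hm1, hma⟩ : ∃ m : ℝ, 0 < m ∧ m ≤ 1 ∧ 2 * m / t ≤ a := by
    refine ⟨min 1 (a * t / 2), by positivity, min_le_left _ _, ?_⟩
    rw [div_le_iff₀ ht]
    linarith [min_le_right 1 (a * t / 2)]
  refine ⟨b * t / (2 * (1 + t)), by positivity, fun lam ⟨hl0, hl⟩ => ?_⟩
  have h1 := hu m ⟨hm0, hm1⟩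
  have h2 := hA (2 * m / t) ⟨by positivity, hma⟩
  have h3 := hB (2 * (1 + t) * lam / t) ⟨by positivity, by
    rw [le_div_iff₀ (by positivity)] at hl
    rw [div_le_iff₀ ht]
    linarith⟩
  have h4 := hconv h2 h3 (a := 1 / 2) (b := 1 / 2) (by norm_num) (by norm_num) (by norm_num)
  have h5 := hconv h1 h4 (a := 1 / (1 + t)) (b := t / (1 + t)) (by positivity) (by positivity)
    (by field_simp)
  -- The displacement of `c` cancels the displacement of `z` towards `u`.
  convert h5 using 1
  have ht' : t ≠ 0 := ht.ne'
  have ht1 : 1 + t ≠ 0 := by positivity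
  match_scalars <;> field_simp <;> ring

theorem stmt2 {X : Type*} [AddCommGroup X] [Module ℝ X]
    (S : Set X) (hS : S.Nonempty) (hconv : Convex ℝ S)
    (hcor : (algCor S).Nonempty) :
    algCor (algLin S) = algCor S := by
  obtain ⟨c, hc⟩ := hcor
  refine Set.Subset.antisymm (fun x hx => ?_) (algCor_mono (subset_algLin S))
  obtain ⟨t, ht, hT⟩ := hx (x - c)
  exact mem_algCor_of_between hconv hc ht (hT t ⟨ht.le, le_rfl⟩)
end

section
/- Let X be a real vector space and let S and T be nonempty convex subsets of X with cor(S) ≠ ∅. Then cor(S) ∩ T = ∅ if and only if there exist a nonzero linear functional l : X → ℝ and a real number α such that l(s) ≤ α ≤ l(t) for all s ∈ S and all t ∈ T, and moreover l(s) < α for all s ∈ cor(S). -/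
/-- Convex combinations of a core point, with positive weight, and a point of `S` are core points. -/
lemma algCor_combo_mem {X : Type*} [AddCommGroup X] [Module ℝ X] {S : Set X}
    (hS : Convex ℝ S) {x y : X} (hx : x ∈ algCor S) (hy : y ∈ S) {c a : ℝ}
    (hc : 0 < c) (ha : 0 ≤ a) (hca : c + a = 1) : c • x + a • y ∈ algCor S := by
  intro v
  obtain ⟨lb, hlb, h⟩ := hx v
  refine ⟨c * lb, by positivity, fun lam hlam => ?_⟩
  have h1 : x + (lam / c) • v ∈ S :=
    h _ ⟨div_nonneg hlam.1 hc.le, by rw [div_le_iff₀ hc]; linarith [hlam.2]⟩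
  have h2 := hS h1 hy hc.le ha hca
  have h3 : c • (x + (lam / c) • v) + a • y = c • x + a • y + lam • v := by
    rw [smul_add, smul_smul, mul_div_cancel₀ _ hc.ne']
    abel
  rwa [h3] at h2

lemma algCor_subset {X : Type*} [AddCommGroup X] [Module ℝ X] {S : Set X} :
    algCor S ⊆ S := by
  intro x hx
  obtain ⟨lb, hlb, h⟩ := hx 0
  simpa using h 0 ⟨le_rfl, hlb.le⟩

/-- The cone generated by the differences `t - s` with `s ∈ S` and `t ∈ T`, for convex `S`, `T`. -/
def diffCone {X : Type*} [AddCommGroup X] [Module ℝ X] (S T : Set X)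
    (hS : S.Nonempty) (hT : T.Nonempty) (hSc : Convex ℝ S) (hTc : Convex ℝ T) :
    PointedCone ℝ X where
  carrier := {x | ∃ a : ℝ, 0 ≤ a ∧ ∃ s ∈ S, ∃ t ∈ T, x = a • (t - s)}
  zero_mem' := by
    obtain ⟨s, hs⟩ := hS
    obtain ⟨t, ht⟩ := hT
    exact ⟨0, le_rfl, s, hs, t, ht, by simp⟩
  add_mem' := by
    rintro _ _ ⟨a, ha, s, hs, t, ht, rfl⟩ ⟨b, hb, s', hs', t', ht', rfl⟩
    rcases (add_nonneg ha hb).eq_or_lt with h | h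
    · obtain rfl : a = 0 := by linarith
      obtain rfl : b = 0 := by linarith
      exact ⟨0, le_rfl, s, hs, t, ht, by simp⟩
    · have hw : a / (a + b) + b / (a + b) = 1 := by field_simp
      refine ⟨a + b, h.le, _, hSc hs hs' (div_nonneg ha h.le) (div_nonneg hb h.le) hw,
        _, hTc ht ht' (div_nonneg ha h.le) (div_nonneg hb h.le) hw, ?_⟩
      match_scalars <;> field_simp
  smul_mem' := by
    rintro ⟨c, hc⟩ _ ⟨a, ha, s, hs, t, ht, rfl⟩
    exact ⟨c * a, mul_nonneg hc ha, s, hs, t, ht, by rw [mul_smul]; rfl⟩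

/-- A functional weakly separating `S` from `T` and normalised to take the value `1` on the
difference of a point of `T` and a core point of `S`. -/
lemma exists_separating {X : Type*} [AddCommGroup X] [Module ℝ X] {S T : Set X}
    (hSc : Convex ℝ S) (hTc : Convex ℝ T) (hdisj : algCor S ∩ T = ∅)
    {s₀ t₀ : X} (hs₀ : s₀ ∈ algCor S) (ht₀ : t₀ ∈ T) :
    ∃ g : X →ₗ[ℝ] ℝ, g (t₀ - s₀) = 1 ∧ ∀ s ∈ S, ∀ t ∈ T, g s ≤ g t := by
  have hz : t₀ - s₀ ≠ 0 := by
    intro h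
    rw [sub_eq_zero] at h
    subst h
    exact Set.eq_empty_iff_forall_notMem.1 hdisj _ ⟨hs₀, ht₀⟩
  let P := diffCone S T ⟨s₀, algCor_subset hs₀⟩ ⟨t₀, ht₀⟩ hSc hTc
  let f : X →ₗ.[ℝ] ℝ := LinearPMap.mkSpanSingleton (t₀ - s₀) 1 hz
  have hf : ∀ (c : ℝ) (h : c • (t₀ - s₀) ∈ f.domain), f ⟨c • (t₀ - s₀), h⟩ = c := by
    intro c h
    have := LinearPMap.mkSpanSingleton'_apply (R := ℝ) (t₀ - s₀) (1 : ℝ)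
      (fun c hc => by simpa [hz] using hc) c h
    exact this.trans (by simp)
  have hdom : ∀ c : ℝ, c • (t₀ - s₀) ∈ f.domain := fun c =>
    Submodule.mem_span_singleton.2 ⟨c, rfl⟩
  obtain ⟨g, hgf, hgP⟩ := riesz_extension P f
    (by
      rintro ⟨x, hx⟩ hxP
      obtain ⟨c, rfl⟩ := Submodule.mem_span_singleton.1 hx
      rw [hf]
      by_contra! hc
      obtain ⟨a, ha, s, hs, t, ht, he⟩ := hxP
      replace he : c • (t₀ - s₀) = a • (t - s) := he
      have hk : 0 < -c + a := by linarith
      have hw : -c / (-c + a) + a / (-c + a) = 1 := by rw [← add_div, div_self hk.ne']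
      have h1 := algCor_combo_mem hSc hs₀ hs (div_pos (neg_pos.2 hc) hk)
        (div_nonneg ha hk.le) hw
      have h2 := hTc ht₀ ht (div_nonneg (neg_pos.2 hc).le hk.le) (div_nonneg ha hk.le) hw
      have h3 : (-c / (-c + a)) • s₀ + (a / (-c + a)) • s
          = (-c / (-c + a)) • t₀ + (a / (-c + a)) • t := by
        have h4 : (-c) • s₀ + a • s = (-c) • t₀ + a • t := by
          rw [← sub_eq_zero] at he ⊢
          rw [← he]
          module
        have h5 := congrArg (fun v => (-c + a)⁻¹ • v) h4
        simpa only [smul_add, smul_smul, div_eq_inv_mul] using h5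
      exact Set.eq_empty_iff_forall_notMem.1 hdisj _ ⟨h1, h3 ▸ h2⟩)
    (by
      intro y
      obtain ⟨lb, hlb, h⟩ := hs₀ (-y)
      refine ⟨⟨lb⁻¹ • (t₀ - s₀), hdom _⟩, lb⁻¹, by positivity, _, h lb ⟨hlb.le, le_rfl⟩,
        t₀, ht₀, ?_⟩
      match_scalars <;> field_simp)
  refine ⟨g, ?_, fun s hs t ht => ?_⟩
  · have h := hgf ⟨(1 : ℝ) • (t₀ - s₀), hdom 1⟩
    rw [hf] at h
    simpa only [one_smul] using h
  · have h := hgP (t - s) ⟨1, zero_le_one, s, hs, t, ht, (one_smul _ _).symm⟩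
    rw [map_sub] at h
    linarith

theorem stmt3 {X : Type*} [AddCommGroup X] [Module ℝ X]
    (S T : Set X) (hS : S.Nonempty) (hT : T.Nonempty)
    (hSconv : Convex ℝ S) (hTconv : Convex ℝ T)
    (hcor : (algCor S).Nonempty) :
    algCor S ∩ T = ∅ ↔
      ∃ l : X →ₗ[ℝ] ℝ, l ≠ 0 ∧ ∃ α : ℝ,
        (∀ s ∈ S, l s ≤ α) ∧ (∀ t ∈ T, α ≤ l t) ∧
        (∀ s ∈ algCor S, l s < α) := by
  constructor
  · intro hdisj
    obtain ⟨s₀, hs₀⟩ := hcor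
    obtain ⟨t₀, ht₀⟩ := hT
    obtain ⟨g, hg1, hg⟩ := exists_separating hSconv hTconv hdisj hs₀ ht₀
    have hbdd : BddAbove (g '' S) :=
      ⟨g t₀, by rintro _ ⟨s, hs, rfl⟩; exact hg s hs t₀ ht₀⟩
    have hle : ∀ s ∈ S, g s ≤ sSup (g '' S) := fun s hs => le_csSup hbdd ⟨s, hs, rfl⟩
    refine ⟨g, ?_, sSup (g '' S), hle, fun t ht => ?_, fun s hs => ?_⟩
    · rintro rfl
      simp at hg1
    · refine csSup_le (hS.image g) ?_
      rintro _ ⟨s, hs, rfl⟩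
      exact hg s hs t ht
    · obtain ⟨lb, hlb, h⟩ := hs (t₀ - s₀)
      have h' := hle _ (h lb ⟨hlb.le, le_rfl⟩)
      rw [map_add, map_smul, hg1, smul_eq_mul, mul_one] at h'
      linarith
  · rintro ⟨l, -, α, -, hlT, hlcor⟩
    refine Set.eq_empty_iff_forall_notMem.2 fun x hx => ?_
    linarith [hlT x hx.2, hlcor x hx.1]
end

section
/- Let X be a real vector space, let S be a nonempty convex subset of X with cor(S) ≠ ∅, and let x ∈ X. Then x ∉ cor(S) if and only if there exist a nonzero linear functional l : X → ℝ and a real number α such that l(s) ≤ α ≤ l(x) for all s ∈ S, and moreover l(s) < α for all s ∈ cor(S). -/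
open scoped Pointwise in
theorem absorbent_of_mem_algCor {X : Type*} [AddCommGroup X] [Module ℝ X] {S : Set X} {c : X}
    (hc : c ∈ algCor S) : Absorbent ℝ ((fun y => c + y) ⁻¹' S) := by
  intro x
  obtain ⟨p, hp, hpS⟩ := hc x
  obtain ⟨q, hq, hqS⟩ := hc (-x)
  refine Absorbs.of_norm ⟨max p⁻¹ q⁻¹, fun a ha => ?_⟩
  rw [Real.norm_eq_abs, max_le_iff] at ha
  have ha0 : 0 < |a| := (inv_pos.2 hp).trans_le ha.1
  rw [Set.singleton_subset_iff, Set.mem_smul_set_iff_inv_smul_mem₀ (abs_pos.1 ha0)]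
  change c + a⁻¹ • x ∈ S
  rcases le_total 0 a with h | h
  · rw [abs_of_nonneg h] at ha ha0
    exact hpS _ ⟨(inv_pos.2 ha0).le, inv_le_of_inv_le₀ hp ha.1⟩
  · rw [abs_of_nonpos h] at ha ha0
    have := hqS (-a)⁻¹ ⟨(inv_pos.2 ha0).le, inv_le_of_inv_le₀ hq ha.2⟩
    rwa [inv_neg, neg_smul_neg] at this

/-- A point of the half-open segment from a core point `c` to a point `s` of a convex set is again
a core point. -/
theorem combo_mem_algCor {X : Type*} [AddCommGroup X] [Module ℝ X] {S : Set X}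
    (hconv : Convex ℝ S) {c s : X} (hc : c ∈ algCor S) (hs : s ∈ S) {r : ℝ}
    (hr0 : 0 ≤ r) (hr1 : r < 1) : (1 - r) • c + r • s ∈ algCor S := by
  intro y
  obtain ⟨p, hp, hpS⟩ := hc y
  have h1 : 0 < 1 - r := sub_pos.2 hr1
  refine ⟨(1 - r) * p, mul_pos h1 hp, fun lam hlam => ?_⟩
  have hmem := hpS (lam / (1 - r)) ⟨div_nonneg hlam.1 h1.le, by
    rw [div_le_iff₀ h1, mul_comm]; exact hlam.2⟩
  have key := hconv hmem hs h1.le hr0 (by ring)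
  rw [smul_add, smul_smul, mul_div_cancel₀ _ h1.ne'] at key
  rwa [add_right_comm]

/-- A nonzero linear functional does not attain an upper bound on `S` at a core point of `S`. -/
theorem lt_of_mem_algCor {X : Type*} [AddCommGroup X] [Module ℝ X] {S : Set X}
    {l : X →ₗ[ℝ] ℝ} (hl : l ≠ 0) {α : ℝ} (hle : ∀ s ∈ S, l s ≤ α) {s : X} (hs : s ∈ algCor S) :
    l s < α := by
  obtain ⟨y, hy⟩ : ∃ y, l y ≠ 0 := by
    by_contra! h
    exact hl (LinearMap.ext h)
  -- The direction `l y • y` is one of increase, since `l (l y • y) = (l y) ^ 2`.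
  obtain ⟨p, hp, hpS⟩ := hs (l y • y)
  have h := hle _ (hpS p ⟨hp.le, le_rfl⟩)
  simp only [map_add, map_smul, smul_eq_mul] at h
  have := mul_pos hp (mul_self_pos.2 hy)
  linarith

open scoped Pointwise in
theorem one_le_gauge_of_notMem_algCor {X : Type*} [AddCommGroup X] [Module ℝ X] {S : Set X}
    (hconv : Convex ℝ S) {c x : X} (hc : c ∈ algCor S) (hx : x ∉ algCor S) :
    1 ≤ gauge ((fun y => c + y) ⁻¹' S) (x - c) := by
  by_contra! h
  obtain ⟨r, hr0, hr1, t, ht, hxt⟩ := exists_lt_of_gauge_lt (absorbent_of_mem_algCor hc) h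
  have hxt' : r • t = x - c := hxt
  have hx' : (1 - r) • c + r • (c + t) = x := by
    rw [smul_add, hxt', sub_smul, one_smul]
    abel
  exact hx (hx' ▸ combo_mem_algCor hconv hc ht hr0.le hr1)

/-- Hahn-Banach on a line: a sublinear function `N ≥ 0` with `N v ≥ 1` dominates some linear
functional taking the value `1` at `v`. -/
theorem exists_le_of_one_le {X : Type*} [AddCommGroup X] [Module ℝ X] (N : X → ℝ)
    (hhom : ∀ a : ℝ, 0 < a → ∀ x, N (a • x) = a * N x)
    (hadd : ∀ x y, N (x + y) ≤ N x + N y) (hnn : ∀ x, 0 ≤ N x) {v : X} (hv0 : v ≠ 0)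
    (hv : 1 ≤ N v) : ∃ g : X →ₗ[ℝ] ℝ, g v = 1 ∧ ∀ x, g x ≤ N x := by
  let f : X →ₗ.[ℝ] ℝ := LinearPMap.mkSpanSingleton v 1 hv0
  obtain ⟨g, hg1, hg2⟩ := exists_extension_of_le_sublinear f N hhom hadd (by
    rintro ⟨x, hx⟩
    obtain ⟨a, rfl⟩ := Submodule.mem_span_singleton.1 hx
    rw [LinearPMap.mkSpanSingleton'_apply, smul_eq_mul, mul_one]
    change a ≤ N (a • v)
    rcases le_or_gt a 0 with h | h
    · exact h.trans (hnn _)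
    · rw [hhom a h]
      exact le_mul_of_one_le_right h.le hv)
  exact ⟨g, (hg1 ⟨v, Submodule.mem_span_singleton_self v⟩).trans
    (LinearPMap.mkSpanSingleton'_apply_self ..), hg2⟩

theorem stmt4 {X : Type*} [AddCommGroup X] [Module ℝ X]
    (S : Set X) (hS : S.Nonempty) (hconv : Convex ℝ S)
    (hcor : (algCor S).Nonempty) (x : X) :
    x ∉ algCor S ↔
      ∃ l : X →ₗ[ℝ] ℝ, l ≠ 0 ∧ ∃ α : ℝ,
        (∀ s ∈ S, l s ≤ α) ∧ α ≤ l x ∧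
        (∀ s ∈ algCor S, l s < α) := by
  constructor
  · intro hx
    obtain ⟨c, hc⟩ := hcor
    have habs := absorbent_of_mem_algCor hc
    have hT : Convex ℝ ((fun y => c + y) ⁻¹' S) := hconv.translate_preimage_right c
    have hne : x - c ≠ 0 := fun h => hx (sub_eq_zero.1 h ▸ hc)
    obtain ⟨g, hg1, hg⟩ := exists_le_of_one_le (gauge ((fun y => c + y) ⁻¹' S))
      (fun a ha y => gauge_smul_of_nonneg ha.le y) (gauge_add_le hT habs)
      (fun y => gauge_nonneg y) hne (one_le_gauge_of_notMem_algCor hconv hc hx)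
    have hg0 : g ≠ 0 := by
      rintro rfl
      simp at hg1
    have hle : ∀ s ∈ S, g s ≤ g x := by
      intro s hs
      have h := (hg (s - c)).trans (gauge_le_one_of_mem (by simpa using hs))
      rw [map_sub] at h hg1
      linarith
    exact ⟨g, hg0, g x, hle, le_rfl, fun s hs => lt_of_mem_algCor hg0 hle hs⟩
  · rintro ⟨l, -, α, -, hx, hlt⟩ hxc
    exact (hlt x hxc).not_ge hx
end

section
/- Let X be a real vector space and let S be a nonempty convex subset of X with cor(S) ≠ ∅. Then the algebraic interior of S equals the complement of the algebraic closure of the complement of S: cor(S) = X \ lin(X \ S). -/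
theorem stmt6 {X : Type*} [AddCommGroup X] [Module ℝ X]
    (S : Set X) (hS : S.Nonempty) (hconv : Convex ℝ S)
    (hcor : (algCor S).Nonempty) :
    algCor S = (algLin Sᶜ)ᶜ := by
  ext x
  constructor
  · rintro hx (hxS | ⟨z, -, -, hz⟩)
    · obtain ⟨b, hb, h⟩ := hx 0
      exact hxS (by simpa using h 0 ⟨le_rfl, hb.le⟩)
    · obtain ⟨b, hb, h⟩ := hx (z - x)
      have hpos : 0 < min b 1 := lt_min hb one_pos
      refine hz (min b 1) ⟨hpos, min_le_right _ _⟩ ?_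
      convert h (min b 1) ⟨hpos.le, min_le_left _ _⟩ using 1
      module
  · intro hx y
    have hxS : x ∈ S := by
      by_contra h
      exact hx (Or.inl h)
    have key : ∃ c : ℝ, 0 < c ∧ x + c • y ∈ S := by
      by_cases hy : y = 0
      · exact ⟨1, one_pos, by simpa [hy] using hxS⟩
      by_contra! hno
      have hseg : ∀ c : ℝ, c ∈ Set.Ioc (0 : ℝ) 1 → c • (x + y) + (1 - c) • x ∈ Sᶜ := by
        intro c hc
        have e : c • (x + y) + (1 - c) • x = x + c • y := by module
        rw [e]
        exact hno c hc.1
      exact hx (Or.inr ⟨x + y, by simpa using hno 1 one_pos, by simpa using hy, hseg⟩)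
    obtain ⟨c, hc, hcS⟩ := key
    refine ⟨c, hc, fun t ht => ?_⟩
    have hmem := hconv.add_smul_mem hxS hcS (t := t / c)
      ⟨div_nonneg ht.1 hc.le, div_le_one_of_le₀ ht.2 hc.le⟩
    rwa [smul_smul, div_mul_cancel₀ t hc.ne'] at hmem
end

section
/- Let X be a real vector space and let A be a nonempty convex subset of X with cor(A) ≠ ∅. Then the algebraic closure is idempotent on A: lin(lin(A)) = lin(A). -/
/-- If all segments from a core point `c` to points `u` of `B` lie in `A` except possibly for `u`,
then the same is true of the segments from `c` to points of `algLin B`. -/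
theorem segment_of_mem_algLin {X : Type*} [AddCommGroup X] [Module ℝ X]
    {A B : Set X} (hconv : Convex ℝ A) {c : X} (hc : c ∈ algCor A)
    (hB : ∀ u ∈ B, ∀ s : ℝ, s ∈ Set.Ioc (0 : ℝ) 1 → s • c + (1 - s) • u ∈ A) :
    ∀ z ∈ algLin B, ∀ t : ℝ, t ∈ Set.Ioc (0 : ℝ) 1 → t • c + (1 - t) • z ∈ A := by
  rintro z (hz | ⟨x, -, -, hx⟩) t ht
  · exact hB z hz t ht
  obtain ⟨ht0, ht1⟩ := ht
  have h2t : 0 < 2 - t := by linarith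
  obtain ⟨lb, hlb, hcA⟩ := hc ((2 * (1 - t) / t) • (z - x))
  have hl0 : 0 < min lb 1 := lt_min hlb one_pos
  have h1 := hcA (min lb 1) ⟨hl0.le, min_le_left _ _⟩
  have hu := hx (min lb 1) ⟨hl0, min_le_right _ _⟩
  have h2 := hB _ hu (t / (2 - t))
    ⟨div_pos ht0 h2t, (div_le_one h2t).2 (by linarith)⟩
  -- Half of the weight `t` goes to the displaced point of `A` near `c`, the other half to `c`.
  -- The displacement is chosen so that the terms in `x` cancel.
  have h3 := hconv h1 h2 (a := t / 2) (b := 1 - t / 2)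
    (by linarith) (by linarith) (by ring)
  convert h3 using 1
  have ht' := ht0.ne'
  have h2t' := h2t.ne'
  match_scalars <;> field_simp <;> ring

theorem stmt8 {X : Type*} [AddCommGroup X] [Module ℝ X]
    (A : Set X) (hA : A.Nonempty) (hconv : Convex ℝ A)
    (hcor : (algCor A).Nonempty) :
    algLin (algLin A) = algLin A := by
  obtain ⟨c, hc⟩ := hcor
  have hcA : c ∈ A := by
    obtain ⟨lb, hlb, h⟩ := hc 0
    simpa using h 0 ⟨le_rfl, hlb.le⟩
  refine Set.Subset.antisymm (fun z hz => ?_) Set.subset_union_left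
  have hseg := segment_of_mem_algLin hconv hc
    (segment_of_mem_algLin hconv hc fun u hu s hs =>
      hconv hcA hu hs.1.le (sub_nonneg.2 hs.2) (by ring)) z hz
  by_cases hcz : c = z
  · exact Or.inl (hcz ▸ hcA)
  · exact Or.inr ⟨c, hcA, hcz, hseg⟩
end
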